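/- arXiv:1604.02190 — 2 statements merged into one kernel-verified Lean document; each statement's English description precedes it below -/
import Mathlib

section
/- For all integers k ≥ ℓ ≥ 0, all α, β ∈ ℤ, and every integer n with 0 ≤ n < ℓ, one has ⟨P_{k,ℓ}^{(α,β)}(z), z^n⟩_D = 0, where ⟨f,g⟩_D = Σ_{i≥0} d_{α+i} · (coefficient of z^i in f·g). That is, P_{k,ℓ}^{(α,β)} satisfies the second family of orthogonality conditions of a type II multiple orthogonal polynomial. -/
/-- The `ĜL₃` determinantal polynomial `P_{k,ℓ}^{(α,β)}(z)`: `(−1)^{ℓ(ℓ+1)/2}` times the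
determinant of the `(k+1) × (k+1)` matrix whose `(i,j)` entry is `d_{α+i+j}` for
`0 ≤ j ≤ ℓ-1`, `c_{α−β+i+j−ℓ}` for `ℓ ≤ j ≤ k-1`, and `z^i` for `j = k`. -/
noncomputable def P3 (c d : ℤ → ℂ) (k ℓ : ℕ) (α β : ℤ) : Polynomial ℂ :=
  (-1 : Polynomial ℂ) ^ (ℓ * (ℓ + 1) / 2) *
    Matrix.det (Matrix.of fun i j : Fin (k + 1) =>
      if (j : ℕ) < ℓ then Polynomial.C (d (α + (i : ℕ) + (j : ℕ)))
      else if (j : ℕ) < k then Polynomial.C (c (α - β + (i : ℕ) + (j : ℕ) - (ℓ : ℤ)))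
      else Polynomial.X ^ (i : ℕ))

/-- The moment bilinear form `⟨f,g⟩_D = Σ_{i ≥ 0} d_{α+i} ⬝ (coefficient of z^i in f⬝g)`,
a finite sum. -/
noncomputable def momentFormD (d : ℤ → ℂ) (α : ℤ) (f g : Polynomial ℂ) : ℂ :=
  ∑ i ∈ (f * g).support, d (α + (i : ℤ)) * (f * g).coeff i

/-!
Only the last column of the determinant is non-constant, so a linear functional passes through the
determinant to that column. Applying `f ↦ ⟨f, z^n⟩_D` turns the last column `z^i` into
`d_{α+i+n}`, which for `n < ℓ` is column `n` of the same matrix.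
-/

section LinearFunctional

variable {ι R A : Type*} [Fintype ι] [DecidableEq ι] [CommRing R] [CommRing A] [Algebra R A]

theorem map_det_updateCol_map_algebraMap (φ : A →ₗ[R] R) (N : Matrix ι ι R) (j : ι) (v : ι → A) :
    φ ((N.map (algebraMap R A)).updateCol j v).det = (N.updateCol j fun i => φ (v i)).det := by
  have adjugate_map : (N.map (algebraMap R A)).adjugate = N.adjugate.map (algebraMap R A) :=
    ((algebraMap R A).map_adjugate N).symm
  simp only [← Matrix.cramer_apply, Matrix.cramer_eq_adjugate_mulVec, adjugate_map,
    Matrix.mulVec, dotProduct, Matrix.map_apply, ← Algebra.smul_def, map_sum, map_smul,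
    smul_eq_mul]

theorem map_det_updateCol_eq_zero (φ : A →ₗ[R] R) (N : Matrix ι ι R) {j j' : ι} (hj : j' ≠ j)
    {v : ι → A} (hv : ∀ i, φ (v i) = N i j') :
    φ ((N.map (algebraMap R A)).updateCol j v).det = 0 := by
  rw [map_det_updateCol_map_algebraMap, funext hv]
  exact Matrix.det_updateCol_eq_zero hj

end LinearFunctional

section MomentFunctional

open Polynomial

variable {R : Type*} [CommSemiring R]

/-- The linear functional on polynomials with moments `μ`, that is, sending `X ^ i` to `μ i`. -/
noncomputable def momentFunctional (μ : ℕ → R) : R[X] →ₗ[R] R :=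
  lsum fun i => LinearMap.toSpanSingleton R R (μ i)

theorem momentFunctional_X_pow (μ : ℕ → R) (n : ℕ) :
    momentFunctional μ (X ^ n) = μ n := by
  simp [momentFunctional, lsum_apply, ← monomial_one_right_eq_X_pow]

theorem momentFormD_eq_momentFunctional (d : ℤ → ℂ) (α : ℤ) (f g : ℂ[X]) :
    momentFormD d α f g = momentFunctional (fun i => d (α + i)) (f * g) := by
  simp only [momentFormD, momentFunctional, lsum_apply, sum_def,
    LinearMap.toSpanSingleton_apply, smul_eq_mul, mul_comm]

end MomentFunctional

/-- The scalar matrix of moments underlying `P3`. Its last column continues the pattern of the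
`c`-columns and serves as a placeholder, to be replaced by the powers of the variable. -/
def momentMatrix {R : Type*} (c d : ℤ → R) (k ℓ : ℕ) (α β : ℤ) :
    Matrix (Fin (k + 1)) (Fin (k + 1)) R :=
  Matrix.of fun i j =>
    if (j : ℕ) < ℓ then d (α + (i : ℕ) + (j : ℕ))
    else c (α - β + (i : ℕ) + (j : ℕ) - (ℓ : ℤ))

theorem P3_eq_smul_det_updateCol (c d : ℤ → ℂ) {k ℓ : ℕ} (hℓk : ℓ ≤ k) (α β : ℤ) :
    P3 c d k ℓ α β = (-1 : ℂ) ^ (ℓ * (ℓ + 1) / 2) •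
      (((momentMatrix c d k ℓ α β).map (algebraMap ℂ (Polynomial ℂ))).updateCol (Fin.last k)
        fun i => Polynomial.X ^ (i : ℕ)).det := by
  rw [P3, Algebra.smul_def, map_pow, map_neg, map_one]
  congr 2
  ext1 i j
  induction j using Fin.lastCases with
  | last => simp [hℓk.not_gt]
  | cast j =>
    rw [Matrix.updateCol_ne (Fin.castSucc_lt_last j).ne]
    simp [momentMatrix, apply_ite Polynomial.C]

theorem P3_orthogonality_D (c d : ℤ → ℂ) (k ℓ : ℕ) (hℓk : ℓ ≤ k) (α β : ℤ)
    (n : ℕ) (hn : n < ℓ) :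
    momentFormD d α (P3 c d k ℓ α β) (Polynomial.X ^ n) = 0 := by
  let φ : Polynomial ℂ →ₗ[ℂ] ℂ :=
    momentFunctional (fun i => d (α + i)) ∘ₗ LinearMap.mulRight ℂ (Polynomial.X ^ n)
  let col : Fin (k + 1) := ⟨n, by omega⟩
  have col_ne_last : col ≠ Fin.last k := Fin.ne_of_lt (hn.trans_le hℓk)
  have φ_X_pow (i : Fin (k + 1)) :
      φ (Polynomial.X ^ (i : ℕ)) = momentMatrix c d k ℓ α β i col := by
    simp [φ, col, momentMatrix, hn, ← pow_add, momentFunctional_X_pow, add_assoc]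
  calc
    momentFormD d α (P3 c d k ℓ α β) (Polynomial.X ^ n) = φ (P3 c d k ℓ α β) :=
      momentFormD_eq_momentFunctional d α _ _
    _ = 0 := by
      rw [P3_eq_smul_det_updateCol c d hℓk, map_smul,
        map_det_updateCol_eq_zero φ _ col_ne_last φ_X_pow, smul_zero]
end

section
/- For all integers k, ℓ ≥ 0 and all α, β ∈ ℤ, the tau-functions satisfy equation (3) of the generalized Q-system: (τ_{k,ℓ}^{(α,β+1)})² = τ_{k,ℓ}^{(α,β)} τ_{k,ℓ}^{(α,β+2)} − τ_{k,ℓ−1}^{(α,β+2)} τ_{k,ℓ+1}^{(α,β)} − τ_{k+1,ℓ}^{(α,β+2)} τ_{k−1,ℓ}^{(α,β)}. -/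
/-- The `ĜL₃` tau-function (with `E(z) = 0`): for `k ≥ ℓ ≥ 0`, `(−1)^{ℓ(ℓ+1)/2}` times the
determinant of the `k × k` matrix whose `(i,j)` entry is `d_{α+i+j}` for `0 ≤ j ≤ ℓ-1` and
`c_{α−β+i+j−ℓ}` for `ℓ ≤ j ≤ k-1`; it is set to `0` whenever `k < ℓ`, `ℓ < 0`, or `k < 0`. -/
noncomputable def tau3Z (c d : ℤ → ℂ) (k ℓ α β : ℤ) : ℂ :=
  if k < ℓ ∨ ℓ < 0 ∨ k < 0 then 0
  else
    (-1 : ℂ) ^ (ℓ.toNat * (ℓ.toNat + 1) / 2) *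
      Matrix.det (Matrix.of fun i j : Fin k.toNat =>
        if ((j : ℕ) : ℤ) < ℓ then d (α + (i : ℕ) + (j : ℕ))
        else c (α - β + (i : ℕ) + (j : ℕ) - ℓ))

/-!
Up to sign, the tau-function is the determinant of a square matrix whose first `ℓ` columns
form a Hankel matrix in `d` and whose remaining columns form a Hankel matrix in `c`; raising `β`
lowers the starting index of the `c`-block. Expanding `A * adjugate A = det A • 1` along the last
column and pairing the rows of this relation with a second mixed Hankel matrix `B` gives a
quadratic relation `∑ j, det (B with last column A_j) * cofactor_j A = det A * cofactor B`.
Because of the Hankel structure, the columns of `A` without their top entry are columns of `B`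
except at the end of the `d`-block and at the two ends of the `c`-block, so only three terms of the
sum survive.
-/

section Determinants

variable {R : Type*} [CommRing R]

theorem sum_det_updateCol_mul_adjugate {m n : Type*} [Fintype m] [DecidableEq m] [Fintype n]
    [DecidableEq n] (A : Matrix m m R) (B : Matrix n n R) {s : n → m}
    (hs : Function.Injective s) (p q : n) :
    ∑ j, (B.updateCol p fun i => A (s i) j).det * A.adjugate j (s q) =
      A.det * B.adjugate p q := by
  have adjugate_mul_rows : ∀ j, (B.adjugate * A.submatrix s id) p j =
      (B.updateCol p fun i => A (s i) j).det := fun j => by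
    rw [← Matrix.cramer_apply, Matrix.cramer_eq_adjugate_mulVec]
    rfl
  have rows_mul_adjugate : A.submatrix s id * A.adjugate.submatrix id s =
      A.det • (1 : Matrix n n R) := by
    rw [← Matrix.submatrix_mul A A.adjugate s id s Function.bijective_id, Matrix.mul_adjugate,
      Matrix.submatrix_smul, Pi.smul_apply, Pi.smul_apply, Matrix.submatrix_one s hs]
  calc ∑ j, (B.updateCol p fun i => A (s i) j).det * A.adjugate j (s q)
      = (B.adjugate * A.submatrix s id * A.adjugate.submatrix id s) p q := by
        simp only [← adjugate_mul_rows]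
        rw [Matrix.mul_apply]
        rfl
    _ = A.det * B.adjugate p q := by
        rw [Matrix.mul_assoc, rows_mul_adjugate, Matrix.mul_smul, Matrix.mul_one,
          Matrix.smul_apply, smul_eq_mul]

theorem det_updateCol_of_submatrix_succAbove_eq {n : ℕ}
    {A B : Matrix (Fin (n + 1)) (Fin (n + 1)) R} {p q : Fin (n + 1)}
    (h : A.submatrix id q.succAbove = B.submatrix id p.succAbove) :
    (B.updateCol p fun i => A i q).det = (-1) ^ (p + q : ℕ) * A.det := by
  have minors_eq : ∀ i : Fin (n + 1),
      B.submatrix i.succAbove p.succAbove = A.submatrix i.succAbove q.succAbove := fun i =>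
    congrArg (Matrix.submatrix · i.succAbove id) h.symm
  rw [Matrix.det_succ_column _ p, Matrix.det_succ_column A q, Finset.mul_sum]
  refine Finset.sum_congr rfl fun i _ => ?_
  rw [Matrix.updateCol_self, Matrix.submatrix_updateCol_succAbove, minors_eq]
  have sign_sq : ((-1 : R) ^ (q : ℕ)) ^ 2 = 1 := by rw [pow_right_comm, neg_one_sq, one_pow]
  linear_combination
    (-(-1 : R) ^ (i + p : ℕ) * A i q * (A.submatrix i.succAbove q.succAbove).det) * sign_sq

end Determinants

/-- The `m × n` matrix whose first `ℓ` columns are those of the Hankel matrix of `d` starting at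
`d_α`, and whose remaining columns are those of the Hankel matrix of `c` starting at `c_γ`. -/
def mixedHankel {R : Type*} (c d : ℤ → R) (α γ : ℤ) (ℓ m n : ℕ) : Matrix (Fin m) (Fin n) R :=
  Matrix.of fun i j =>
    if (j : ℕ) < ℓ then d (α + (i : ℕ) + (j : ℕ)) else c (γ + (i : ℕ) + (j : ℕ) - ℓ)

namespace mixedHankel

section Entries

variable {R : Type*} (c d : ℤ → R) (α γ : ℤ)

theorem apply_eq_apply_of_lt (γ' : ℤ) {ℓ ℓ' m n m' n' : ℕ} {i : Fin m} {j : Fin n} {i' : Fin m'}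
    {j' : Fin n'} (hj : (j : ℕ) < ℓ) (hj' : (j' : ℕ) < ℓ') (h : (i + j : ℕ) = i' + j') :
    mixedHankel c d α γ ℓ m n i j = mixedHankel c d α γ' ℓ' m' n' i' j' := by
  simp only [mixedHankel, Matrix.of_apply, if_pos hj, if_pos hj']
  congr 1
  omega

theorem apply_eq_apply_of_le {γ' : ℤ} {ℓ ℓ' m n m' n' : ℕ} {i : Fin m} {j : Fin n} {i' : Fin m'}
    {j' : Fin n'} (hj : ℓ ≤ j) (hj' : ℓ' ≤ j') (h : γ + (i + j : ℕ) - ℓ = γ' + (i' + j' : ℕ) - ℓ') :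
    mixedHankel c d α γ ℓ m n i j = mixedHankel c d α γ' ℓ' m' n' i' j' := by
  simp only [mixedHankel, Matrix.of_apply, if_neg hj.not_gt, if_neg hj'.not_gt]
  congr 1
  omega

theorem submatrix_delete_first_c (ℓ m n : ℕ) (h : ℓ < n + 1) :
    (mixedHankel c d α γ ℓ m (n + 1)).submatrix id (Fin.succAbove ⟨ℓ, h⟩) =
      mixedHankel c d α (γ + 1) ℓ m n := by
  ext i j
  rw [Matrix.submatrix_apply]
  rcases lt_or_ge (j : ℕ) ℓ with hj | hj
  · rw [Fin.succAbove_of_castSucc_lt _ _ hj]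
    exact apply_eq_apply_of_lt c d α γ _ hj hj rfl
  · rw [Fin.succAbove_of_le_castSucc _ _ hj]
    exact apply_eq_apply_of_le c d α γ (by grind) hj (by grind)

theorem submatrix_delete_last_d (ℓ m n : ℕ) (h : ℓ < n + 1) :
    (mixedHankel c d α γ (ℓ + 1) m (n + 1)).submatrix id (Fin.succAbove ⟨ℓ, h⟩) =
      mixedHankel c d α γ ℓ m n := by
  ext i j
  rw [Matrix.submatrix_apply]
  rcases lt_or_ge (j : ℕ) ℓ with hj | hj
  · rw [Fin.succAbove_of_castSucc_lt _ _ hj]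
    exact apply_eq_apply_of_lt c d α γ _ (by grind) hj rfl
  · rw [Fin.succAbove_of_le_castSucc _ _ hj]
    exact apply_eq_apply_of_le c d α γ (by grind) hj (by grind)

theorem submatrix_delete_last (ℓ m n : ℕ) :
    (mixedHankel c d α γ ℓ m (n + 1)).submatrix id (Fin.last n).succAbove =
      mixedHankel c d α γ ℓ m n := by
  rw [Fin.succAbove_last]
  rfl

end Entries

variable {R : Type*} [CommRing R] (c d : ℤ → R) (α γ : ℤ)

theorem det_self_eq (γ' : ℤ) (n : ℕ) :
    (mixedHankel c d α γ n n n).det = (mixedHankel c d α γ' n n n).det := by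
  congr 1
  ext i j
  exact apply_eq_apply_of_lt c d α γ γ' j.isLt j.isLt rfl

theorem adjugate_apply_last {ℓ n : ℕ} (γ' : ℤ) (ℓ' : ℕ) {p : Fin (n + 1)}
    (h : (mixedHankel c d α γ ℓ n (n + 1)).submatrix id p.succAbove =
      mixedHankel c d α γ' ℓ' n n) :
    (mixedHankel c d α γ ℓ (n + 1) (n + 1)).adjugate p (Fin.last n) =
      (-1) ^ (n + p : ℕ) * (mixedHankel c d α γ' ℓ' n n).det := by
  rw [Matrix.adjugate_fin_succ_eq_det_submatrix, Fin.val_last, Fin.succAbove_last, ← h]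
  rfl

/-- The factor attached to column `j` of `A = mixedHankel c d α γ ℓ (n + 2) (n + 2)` in the
quadratic relation between `A` and `B = mixedHankel c d α (γ + 2) ℓ (n + 1) (n + 1)`: the
determinant of `B` after its last column has been replaced by column `j` of `A` without its top
entry. -/
def exchangeDet (ℓ n : ℕ) (j : Fin (n + 2)) : R :=
  ((mixedHankel c d α (γ + 2) ℓ (n + 1) (n + 1)).updateCol (Fin.last n)
    fun i => mixedHankel c d α γ ℓ (n + 2) (n + 2) i.succ j).det

theorem sum_exchangeDet_mul_adjugate (ℓ n : ℕ) :
    ∑ j, exchangeDet c d α γ ℓ n j *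
        (mixedHankel c d α γ ℓ (n + 2) (n + 2)).adjugate j (Fin.last (n + 1)) =
      (mixedHankel c d α γ ℓ (n + 2) (n + 2)).det * (mixedHankel c d α (γ + 2) ℓ n n).det := by
  have relation := sum_det_updateCol_mul_adjugate (mixedHankel c d α γ ℓ (n + 2) (n + 2))
    (mixedHankel c d α (γ + 2) ℓ (n + 1) (n + 1)) (Fin.succ_injective (n + 1))
    (Fin.last n) (Fin.last n)
  rwa [Fin.succ_last, adjugate_apply_last c d α _ _ _ (submatrix_delete_last c d α _ ℓ n n),
    Fin.val_last, Even.neg_one_pow ⟨n, rfl⟩, one_mul] at relation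

theorem exchangeDet_eq_zero_of_col_eq {ℓ n : ℕ} {j : Fin (n + 2)} {p : Fin (n + 1)}
    (hp : p ≠ Fin.last n)
    (h : ∀ i, mixedHankel c d α (γ + 2) ℓ (n + 1) (n + 1) i p =
      mixedHankel c d α γ ℓ (n + 2) (n + 2) i.succ j) :
    exchangeDet c d α γ ℓ n j = 0 := by
  refine Matrix.det_zero_of_column_eq hp fun i => ?_
  rw [Matrix.updateCol_ne hp, Matrix.updateCol_self, h]

theorem exchangeDet_eq_of_col_eq {ℓ n : ℕ} {j : Fin (n + 2)} (γ' : ℤ) (ℓ' : ℕ) {q : Fin (n + 1)}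
    (hdelete : (mixedHankel c d α γ' ℓ' (n + 1) (n + 1)).submatrix id q.succAbove =
      mixedHankel c d α (γ + 2) ℓ (n + 1) n)
    (hcol : ∀ i, mixedHankel c d α γ ℓ (n + 2) (n + 2) i.succ j =
      mixedHankel c d α γ' ℓ' (n + 1) (n + 1) i q) :
    exchangeDet c d α γ ℓ n j =
      (-1) ^ (n + q : ℕ) * (mixedHankel c d α γ' ℓ' (n + 1) (n + 1)).det := by
  simp only [exchangeDet, hcol]
  exact det_updateCol_of_submatrix_succAbove_eq
    (hdelete.trans (submatrix_delete_last c d α _ ℓ _ _).symm)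

theorem exchangeDet_eq_zero {ℓ n : ℕ} (hℓ : ℓ ≤ n) (j : Fin (n + 2)) (hd : (j : ℕ) + 1 ≠ ℓ)
    (hc : (j : ℕ) ≠ ℓ) (hlast : j ≠ Fin.last (n + 1)) : exchangeDet c d α γ ℓ n j = 0 := by
  have hjn : (j : ℕ) < n + 1 := Fin.val_lt_last hlast
  rcases lt_or_gt_of_ne hc with hj | hj
  · refine exchangeDet_eq_zero_of_col_eq c d α γ (p := ⟨j + 1, by omega⟩)
      (Fin.ne_of_val_ne (by grind)) fun i => ?_
    exact apply_eq_apply_of_lt c d α _ _ (by grind) hj (by grind)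
  · refine exchangeDet_eq_zero_of_col_eq c d α γ (p := ⟨j - 1, by omega⟩)
      (Fin.ne_of_val_ne (by grind)) fun i => ?_
    exact apply_eq_apply_of_le c d α _ (by grind) hj.le (by grind)

theorem exchangeDet_last_d {ℓ n : ℕ} (hℓ : ℓ < n) :
    exchangeDet c d α γ (ℓ + 1) n ⟨ℓ, by omega⟩ =
      (-1) ^ (n + ℓ + 1) * (mixedHankel c d α (γ + 2) (ℓ + 2) (n + 1) (n + 1)).det :=
  exchangeDet_eq_of_col_eq c d α γ (γ + 2) (ℓ + 2) (q := ⟨ℓ + 1, by omega⟩)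
    (submatrix_delete_last_d c d α _ (ℓ + 1) _ _ _)
    fun _ => apply_eq_apply_of_lt c d α _ _ (by simp) (by simp) (by grind)

theorem exchangeDet_first_c {ℓ n : ℕ} (hℓ : ℓ ≤ n) :
    exchangeDet c d α γ ℓ n ⟨ℓ, by omega⟩ =
      (-1) ^ (n + ℓ) * (mixedHankel c d α (γ + 1) ℓ (n + 1) (n + 1)).det :=
  exchangeDet_eq_of_col_eq c d α γ (γ + 1) ℓ (q := ⟨ℓ, by omega⟩)
    ((submatrix_delete_first_c c d α _ ℓ _ _ _).trans (by rw [add_assoc, one_add_one_eq_two]))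
    fun _ => apply_eq_apply_of_le c d α _ le_rfl le_rfl (by grind)

theorem exchangeDet_last {ℓ n : ℕ} (hℓ : ℓ ≤ n) :
    exchangeDet c d α γ ℓ n (Fin.last (n + 1)) =
      (mixedHankel c d α (γ + 2) ℓ (n + 1) (n + 1)).det := by
  rw [exchangeDet_eq_of_col_eq c d α γ (γ + 2) ℓ (q := Fin.last n)
    (submatrix_delete_last c d α _ ℓ _ _)
    fun _ => apply_eq_apply_of_le c d α _ (by grind) (by grind) (by grind),
    Fin.val_last, Even.neg_one_pow ⟨n, rfl⟩, one_mul]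

theorem exchange_term_last_d {ℓ n : ℕ} (hℓ : ℓ < n) :
    exchangeDet c d α γ (ℓ + 1) n ⟨ℓ, by omega⟩ *
        (mixedHankel c d α γ (ℓ + 1) (n + 2) (n + 2)).adjugate ⟨ℓ, by omega⟩ (Fin.last (n + 1)) =
      (mixedHankel c d α (γ + 2) (ℓ + 2) (n + 1) (n + 1)).det *
        (mixedHankel c d α γ ℓ (n + 1) (n + 1)).det := by
  rw [exchangeDet_last_d c d α γ hℓ,
    adjugate_apply_last c d α γ γ ℓ (submatrix_delete_last_d c d α γ ℓ _ _ _)]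
  have sign : (-1 : R) ^ (n + ℓ + 1) * (-1) ^ (n + 1 + ℓ) = 1 := by
    rw [← pow_add]
    exact Even.neg_one_pow ⟨n + ℓ + 1, by ring⟩
  linear_combination (mixedHankel c d α (γ + 2) (ℓ + 2) (n + 1) (n + 1)).det *
    (mixedHankel c d α γ ℓ (n + 1) (n + 1)).det * sign

theorem exchange_term_first_c {ℓ n : ℕ} (hℓ : ℓ ≤ n) :
    exchangeDet c d α γ ℓ n ⟨ℓ, by omega⟩ *
        (mixedHankel c d α γ ℓ (n + 2) (n + 2)).adjugate ⟨ℓ, by omega⟩ (Fin.last (n + 1)) =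
      -(mixedHankel c d α (γ + 1) ℓ (n + 1) (n + 1)).det ^ 2 := by
  rw [exchangeDet_first_c c d α γ hℓ,
    adjugate_apply_last c d α γ (γ + 1) ℓ (submatrix_delete_first_c c d α γ ℓ _ _ _)]
  have sign : (-1 : R) ^ (n + ℓ) * (-1) ^ (n + 1 + ℓ) = -1 := by
    rw [← pow_add]
    exact Odd.neg_one_pow ⟨n + ℓ, by ring⟩
  linear_combination (mixedHankel c d α (γ + 1) ℓ (n + 1) (n + 1)).det ^ 2 * sign

theorem exchange_term_last {ℓ n : ℕ} (hℓ : ℓ ≤ n) :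
    exchangeDet c d α γ ℓ n (Fin.last (n + 1)) *
        (mixedHankel c d α γ ℓ (n + 2) (n + 2)).adjugate (Fin.last (n + 1)) (Fin.last (n + 1)) =
      (mixedHankel c d α (γ + 2) ℓ (n + 1) (n + 1)).det *
        (mixedHankel c d α γ ℓ (n + 1) (n + 1)).det := by
  rw [exchangeDet_last c d α γ hℓ,
    adjugate_apply_last c d α γ γ ℓ (submatrix_delete_last c d α γ ℓ _ _),
    Fin.val_last, Even.neg_one_pow ⟨n + 1, rfl⟩, one_mul]

theorem det_add_two_mul_det_zero (n : ℕ) :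
    (mixedHankel c d α γ 0 (n + 2) (n + 2)).det * (mixedHankel c d α (γ + 2) 0 n n).det =
      (mixedHankel c d α (γ + 2) 0 (n + 1) (n + 1)).det *
          (mixedHankel c d α γ 0 (n + 1) (n + 1)).det -
        (mixedHankel c d α (γ + 1) 0 (n + 1) (n + 1)).det ^ 2 := by
  have first_c := exchange_term_first_c c d α γ n.zero_le
  rw [← sum_exchangeDet_mul_adjugate, Fintype.sum_eq_add ⟨0, by omega⟩ (Fin.last (n + 1)),
    first_c, exchange_term_last c d α γ n.zero_le]
  · ring
  · exact Fin.ne_of_val_ne (by simp)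
  · rintro j ⟨hj, hlast⟩
    rw [exchangeDet_eq_zero c d α γ n.zero_le j (by omega) (Fin.val_ne_of_ne hj) hlast, zero_mul]

theorem det_add_two_mul_det_succ {ℓ n : ℕ} (hℓ : ℓ < n) :
    (mixedHankel c d α γ (ℓ + 1) (n + 2) (n + 2)).det *
        (mixedHankel c d α (γ + 2) (ℓ + 1) n n).det =
      (mixedHankel c d α (γ + 2) (ℓ + 1) (n + 1) (n + 1)).det *
          (mixedHankel c d α γ (ℓ + 1) (n + 1) (n + 1)).det -
        (mixedHankel c d α (γ + 1) (ℓ + 1) (n + 1) (n + 1)).det ^ 2 +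
        (mixedHankel c d α (γ + 2) (ℓ + 2) (n + 1) (n + 1)).det *
          (mixedHankel c d α γ ℓ (n + 1) (n + 1)).det := by
  have last_d := exchange_term_last_d c d α γ hℓ
  have first_c := exchange_term_first_c c d α γ (Nat.succ_le_of_lt hℓ)
  rw [← sum_exchangeDet_mul_adjugate, Fin.sum_univ_castSucc,
    Fintype.sum_eq_add (⟨ℓ, by omega⟩ : Fin (n + 1)) ⟨ℓ + 1, by omega⟩]
  · rw [Fin.castSucc_mk, Fin.castSucc_mk, last_d, first_c, exchange_term_last c d α γ hℓ]
    ring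
  · exact Fin.ne_of_val_ne (by simp)
  · rintro j ⟨hd, hc⟩
    have vanishing := exchangeDet_eq_zero c d α γ (Nat.succ_le_of_lt hℓ) j.castSucc
      (fun h => hd (Fin.ext (Nat.succ_injective h))) (Fin.val_ne_of_ne hc) j.castSucc_ne_last
    rw [vanishing, zero_mul]

end mixedHankel

theorem neg_one_pow_triangle_mul_add_two {R : Type*} [CommRing R] (m : ℕ) :
    (-1 : R) ^ (m * (m + 1) / 2) * (-1) ^ ((m + 2) * (m + 2 + 1) / 2) = -1 := by
  have shift : (m + 2) * (m + 2 + 1) / 2 = m * (m + 1) / 2 + (2 * m + 3) := by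
    rw [← Nat.add_mul_div_left _ _ two_pos]
    congr 1
    ring
  rw [shift, ← pow_add]
  exact Odd.neg_one_pow ⟨m * (m + 1) / 2 + m + 1, by ring⟩

/-- The `ĜL₃` tau-function with `E(z) = 0` for sequences in a commutative ring: the determinant of
a mixed Hankel matrix with the sign `(-1)^{ℓ(ℓ+1)/2}` when `0 ≤ ℓ ≤ k`, and `0` otherwise. -/
def mixedTau {R : Type*} [CommRing R] (c d : ℤ → R) (k ℓ α β : ℤ) : R :=
  if k < ℓ ∨ ℓ < 0 then 0
  else (-1) ^ (ℓ.toNat * (ℓ.toNat + 1) / 2) *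
    (mixedHankel c d α (α - β) ℓ.toNat k.toNat k.toNat).det

theorem tau3Z_eq_mixedTau (c d : ℤ → ℂ) (k ℓ α β : ℤ) :
    tau3Z c d k ℓ α β = mixedTau c d k ℓ α β := by
  by_cases h : k < ℓ ∨ ℓ < 0
  · rw [tau3Z, mixedTau, if_pos h, if_pos (by omega)]
  · rw [tau3Z, mixedTau, if_neg h, if_neg (by omega), mixedHankel]
    simp only [Int.lt_toNat, Int.toNat_of_nonneg (show 0 ≤ ℓ by omega)]

namespace mixedTau

variable {R : Type*} [CommRing R] (c d : ℤ → R)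

theorem eq_zero {k ℓ : ℤ} (h : k < ℓ ∨ ℓ < 0) (α β : ℤ) : mixedTau c d k ℓ α β = 0 :=
  if_pos h

theorem natCast_eq {n m : ℕ} (h : m ≤ n) (α β : ℤ) :
    mixedTau c d n m α β =
      (-1) ^ (m * (m + 1) / 2) * (mixedHankel c d α (α - β) m n n).det := by
  rw [mixedTau, if_neg (by omega), Int.toNat_natCast, Int.toNat_natCast]

theorem self_eq (n : ℕ) (α β β' : ℤ) : mixedTau c d n n α β = mixedTau c d n n α β' := by
  rw [natCast_eq c d le_rfl, natCast_eq c d le_rfl, mixedHankel.det_self_eq]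

theorem sq_zero (n : ℕ) (α β : ℤ) :
    mixedTau c d (n + 1 : ℕ) (0 : ℕ) α (β + 1) ^ 2 =
      mixedTau c d (n + 1 : ℕ) (0 : ℕ) α β * mixedTau c d (n + 1 : ℕ) (0 : ℕ) α (β + 2) -
        mixedTau c d (n + 2 : ℕ) (0 : ℕ) α (β + 2) * mixedTau c d n (0 : ℕ) α β := by
  have condensation := mixedHankel.det_add_two_mul_det_zero c d α (α - (β + 2)) n
  rw [show α - (β + 2) + 1 = α - (β + 1) by ring,
    show α - (β + 2) + 2 = α - β by ring] at condensation
  simp only [natCast_eq c d (Nat.zero_le _), zero_mul, Nat.zero_div, pow_zero, one_mul]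
  linear_combination condensation

theorem sq_succ {n m : ℕ} (h : m < n) (α β : ℤ) :
    mixedTau c d (n + 1 : ℕ) (m + 1 : ℕ) α (β + 1) ^ 2 =
      mixedTau c d (n + 1 : ℕ) (m + 1 : ℕ) α β * mixedTau c d (n + 1 : ℕ) (m + 1 : ℕ) α (β + 2) -
        mixedTau c d (n + 1 : ℕ) m α (β + 2) * mixedTau c d (n + 1 : ℕ) (m + 2 : ℕ) α β -
        mixedTau c d (n + 2 : ℕ) (m + 1 : ℕ) α (β + 2) * mixedTau c d n (m + 1 : ℕ) α β := by
  have condensation := mixedHankel.det_add_two_mul_det_succ c d α (α - (β + 2)) h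
  rw [show α - (β + 2) + 1 = α - (β + 1) by ring,
    show α - (β + 2) + 2 = α - β by ring] at condensation
  simp (disch := omega) only [natCast_eq c d]
  have sign_sq : ((-1 : R) ^ ((m + 1) * (m + 1 + 1) / 2)) ^ 2 = 1 := by
    rw [pow_right_comm, neg_one_sq, one_pow]
  have sign_mul := neg_one_pow_triangle_mul_add_two (R := R) m
  set s := (-1 : R) ^ ((m + 1) * (m + 1 + 1) / 2)
  linear_combination s ^ 2 * condensation +
    (mixedHankel c d α (α - β) (m + 2) (n + 1) (n + 1)).det *
      (mixedHankel c d α (α - (β + 2)) m (n + 1) (n + 1)).det * (sign_mul + sign_sq)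

end mixedTau

theorem gl3_Qsystem_eq3_general {R : Type*} [CommRing R] (c d : ℤ → R) (k ℓ α β : ℤ) :
    (mixedTau c d k ℓ α (β + 1)) ^ 2 =
      mixedTau c d k ℓ α β * mixedTau c d k ℓ α (β + 2) -
        mixedTau c d k (ℓ - 1) α (β + 2) * mixedTau c d k (ℓ + 1) α β -
        mixedTau c d (k + 1) ℓ α (β + 2) * mixedTau c d (k - 1) ℓ α β := by
  rcases lt_or_ge ℓ 0 with hℓ | hℓ
  · simp [mixedTau.eq_zero c d (Or.inr hℓ),
      mixedTau.eq_zero c d (k := k) (Or.inr (show ℓ - 1 < 0 by omega))]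
  lift ℓ to ℕ using hℓ
  rcases lt_trichotomy k ℓ with hk | rfl | hk
  · simp [mixedTau.eq_zero c d (Or.inl hk),
      mixedTau.eq_zero c d (Or.inl (show k < ℓ + 1 by omega)),
      mixedTau.eq_zero c d (Or.inl (show k - 1 < ℓ by omega))]
  · rw [mixedTau.eq_zero c d (Or.inl (lt_add_one _)), mixedTau.eq_zero c d (Or.inl (sub_one_lt _)),
      mixedTau.self_eq c d ℓ α (β + 1) β, mixedTau.self_eq c d ℓ α (β + 2) β]
    ring
  · obtain ⟨n, rfl⟩ : ∃ n : ℕ, k = (n + 1 : ℕ) := ⟨(k - 1).toNat, by omega⟩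
    rw [show ((n + 1 : ℕ) : ℤ) + 1 = (n + 2 : ℕ) by push_cast; ring,
      show ((n + 1 : ℕ) : ℤ) - 1 = n by push_cast; ring]
    rcases ℓ with _ | m
    · rw [mixedTau.sq_zero, mixedTau.eq_zero c d (ℓ := (0 : ℕ) - 1) (Or.inr (by simp)), zero_mul,
        sub_zero]
    · rw [mixedTau.sq_succ c d (by omega), show ((m + 1 : ℕ) : ℤ) - 1 = m by push_cast; ring,
        show ((m + 1 : ℕ) : ℤ) + 1 = (m + 2 : ℕ) by push_cast; ring]

theorem gl3_Qsystem_eq3 (c d : ℤ → ℂ) (k ℓ : ℤ) (hk : 0 ≤ k) (hℓ : 0 ≤ ℓ) (α β : ℤ) :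
    (tau3Z c d k ℓ α (β + 1)) ^ 2 =
      tau3Z c d k ℓ α β * tau3Z c d k ℓ α (β + 2) -
        tau3Z c d k (ℓ - 1) α (β + 2) * tau3Z c d k (ℓ + 1) α β -
        tau3Z c d (k + 1) ℓ α (β + 2) * tau3Z c d (k - 1) ℓ α β := by
  simpa only [tau3Z_eq_mixedTau] using gl3_Qsystem_eq3_general c d k ℓ α β
end
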